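/- Let ρ ∝ exp(−V) on ℝ^d with V convex and L-smooth, let q ≥ 2 be an integer, and let ξ₁, …, ξ_q be i.i.d. N(0, tI) with Lqt < 1. Then ∫ E[exp(−∑_{i=1}^q V(x+ξ_i) + q V(x))] ρ(dx) ≤ (1 − Lqt)^{−d/2}. -/

import Mathlib

open MeasureTheory

noncomputable section

/-- Density of the centered Gaussian N(0, tI) on ℝ^d. -/
def gaussPdf (d : ℕ) (t : ℝ) (x : EuclideanSpace ℝ (Fin d)) : ℝ :=
  (2 * Real.pi * t) ^ (-(d:ℝ)/2) * Real.exp (-‖x‖^2 / (2*t))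

/-- The centered Gaussian measure N(0, tI) on ℝ^d. -/
def gaussMeasure (d : ℕ) (t : ℝ) : Measure (EuclideanSpace ℝ (Fin d)) :=
  volume.withDensity fun x => ENNReal.ofReal (gaussPdf d t x)

/-- Lebesgue integral of a Gaussian. -/
lemma aux_gauss {d : ℕ} {b : ℝ} (hb : 0 < b) :
    ∫⁻ v : EuclideanSpace ℝ (Fin d), ENNReal.ofReal (Real.exp (-b * ‖v‖ ^ 2))
      = ENNReal.ofReal ((Real.pi / b) ^ ((d:ℝ) / 2)) := by
  have h := GaussianFourier.integral_rexp_neg_mul_sq_norm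
    (V := EuclideanSpace ℝ (Fin d)) hb
  rw [finrank_euclideanSpace_fin] at h
  have hpos : 0 < (Real.pi / b) ^ ((d:ℝ) / 2) := by positivity
  rw [← h, ofReal_integral_eq_lintegral_ofReal]
  · by_contra hn
    rw [integral_undef hn] at h
    linarith
  · exact Filter.Eventually.of_forall fun x => (Real.exp_pos _).le

lemma aux_pdf_cont (d : ℕ) (t : ℝ) : Continuous (gaussPdf d t) := by
  unfold gaussPdf
  fun_prop

lemma aux_lint {d : ℕ} (t : ℝ) (f : EuclideanSpace ℝ (Fin d) → ENNReal) (hf : Measurable f) :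
    ∫⁻ x, f x ∂(gaussMeasure d t) = ∫⁻ x, ENNReal.ofReal (gaussPdf d t x) * f x := by
  unfold gaussMeasure
  rw [lintegral_withDensity_eq_lintegral_mul _ (aux_pdf_cont d t).measurable.ennreal_ofReal hf]
  rfl

lemma aux_sq {d : ℕ} {t c : ℝ} (ht : 0 < t) (hc : c * t < 1) :
    ∫⁻ x, ENNReal.ofReal (Real.exp (c * ‖x‖ ^ 2 / 2)) ∂(gaussMeasure d t)
      = ENNReal.ofReal ((1 - c * t) ^ (-(d:ℝ) / 2)) := by
  rw [aux_lint _ _ (by fun_prop)]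
  have hb : 0 < (1 - c * t) / (2 * t) := by
    apply div_pos <;> linarith
  have h1 : ∀ x : EuclideanSpace ℝ (Fin d),
      ENNReal.ofReal (gaussPdf d t x) * ENNReal.ofReal (Real.exp (c * ‖x‖ ^ 2 / 2))
      = ENNReal.ofReal ((2 * Real.pi * t) ^ (-(d:ℝ)/2)) *
        ENNReal.ofReal (Real.exp (-((1 - c * t) / (2 * t)) * ‖x‖ ^ 2)) := by
    intro x
    rw [← ENNReal.ofReal_mul (by unfold gaussPdf; positivity),
      ← ENNReal.ofReal_mul (by positivity)]
    unfold gaussPdf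
    rw [mul_assoc, ← Real.exp_add]
    congr 3
    field_simp
    ring
  simp_rw [h1]
  rw [lintegral_const_mul _ (by fun_prop), aux_gauss hb, ← ENNReal.ofReal_mul (by positivity)]
  congr 1
  have h2 : Real.pi / ((1 - c * t) / (2 * t)) = (2 * Real.pi * t) * (1 - c * t)⁻¹ := by
    field_simp
  have h3 : 0 < 1 - c * t := by linarith
  rw [h2, Real.mul_rpow (x := 2 * Real.pi * t) (by positivity) (by positivity), ← mul_assoc,
    ← Real.rpow_add (by positivity), Real.inv_rpow h3.le, ← Real.rpow_neg h3.le]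
  have : -(d:ℝ)/2 + (d:ℝ)/2 = 0 := by ring
  rw [this, Real.rpow_zero, one_mul, neg_div]

lemma aux_prob {d : ℕ} {t : ℝ} (ht : 0 < t) : IsProbabilityMeasure (gaussMeasure d t) := by
  constructor
  have := aux_sq (d := d) (t := t) (c := 0) ht (by simp)
  simpa using this

lemma aux_mgf {d : ℕ} {t : ℝ} (ht : 0 < t) (a : EuclideanSpace ℝ (Fin d)) :
    ∫⁻ x, ENNReal.ofReal (Real.exp (inner ℝ a x)) ∂(gaussMeasure d t)
      = ENNReal.ofReal (Real.exp (t * ‖a‖ ^ 2 / 2)) := by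
  rw [aux_lint _ _ (by fun_prop)]
  have h1 : ∀ x : EuclideanSpace ℝ (Fin d),
      ENNReal.ofReal (gaussPdf d t x) * ENNReal.ofReal (Real.exp (inner ℝ a x))
      = ENNReal.ofReal (Real.exp (t * ‖a‖ ^ 2 / 2)) *
        ENNReal.ofReal (gaussPdf d t (x - t • a)) := by
    intro x
    rw [← ENNReal.ofReal_mul (by unfold gaussPdf; positivity),
      ← ENNReal.ofReal_mul (by positivity)]
    unfold gaussPdf
    rw [mul_assoc, ← Real.exp_add, mul_left_comm, ← Real.exp_add]
    congr 3
    rw [norm_sub_sq_real, inner_smul_right, norm_smul, real_inner_comm, Real.norm_of_nonneg ht.le]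
    field_simp
    ring
  simp_rw [h1]
  rw [lintegral_const_mul' _ _ ENNReal.ofReal_ne_top,
    lintegral_sub_right_eq_self (fun x => ENNReal.ofReal (gaussPdf d t x))]
  have := aux_lint (d := d) t (fun _ => 1) measurable_const
  have hp := aux_prob (d := d) ht
  simp only [lintegral_const, measure_univ, mul_one] at this
  rw [← this, mul_one]

lemma aux_sum {d : ℕ} {L t : ℝ} (hL : 0 < L) (ht : 0 < t) (q : ℕ) (hqt : L * q * t < 1) :
    ∫⁻ ξ : Fin q → EuclideanSpace ℝ (Fin d),
      ENNReal.ofReal (Real.exp (L * ‖∑ i, ξ i‖ ^ 2 / 2))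
      ∂(Measure.pi fun _ : Fin q => gaussMeasure d t)
    = ENNReal.ofReal ((1 - L * q * t) ^ (-(d:ℝ) / 2)) := by
  have hp := aux_prob (d := d) ht
  have hpL := aux_prob (d := d) hL
  simp_rw [← aux_mgf hL]
  rw [lintegral_lintegral_swap (by
    apply Measurable.aemeasurable
    apply Measurable.ennreal_ofReal
    apply Continuous.measurable
    fun_prop)]
  have h1 : ∀ g : EuclideanSpace ℝ (Fin d),
      ∫⁻ ξ : Fin q → EuclideanSpace ℝ (Fin d),
        ENNReal.ofReal (Real.exp (inner ℝ (∑ i, ξ i) g))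
        ∂(Measure.pi fun _ : Fin q => gaussMeasure d t)
      = ENNReal.ofReal (Real.exp ((q * t) * ‖g‖ ^ 2 / 2)) := by
    intro g
    have h2 : ∀ ξ : Fin q → EuclideanSpace ℝ (Fin d),
        ENNReal.ofReal (Real.exp (inner ℝ (∑ i, ξ i) g))
        = ∏ i, ENNReal.ofReal (Real.exp (inner ℝ g (ξ i))) := by
      intro ξ
      rw [← ENNReal.ofReal_prod_of_nonneg (fun i _ => (Real.exp_pos _).le), ← Real.exp_sum,
        real_inner_comm, inner_sum]
    simp_rw [h2]
    have hm : Measurable fun x : EuclideanSpace ℝ (Fin d) =>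
        ENNReal.ofReal (Real.exp (inner ℝ g x)) := by fun_prop
    rw [ProbabilityTheory.lintegral_prod_eq_prod_lintegral_of_indepFun Finset.univ
      (fun i (ξ : Fin q → EuclideanSpace ℝ (Fin d)) =>
        ENNReal.ofReal (Real.exp (inner ℝ g (ξ i))))
      (ProbabilityTheory.iIndepFun_pi (X := fun _ x => ENNReal.ofReal (Real.exp (inner ℝ g x)))
        (fun i => hm.aemeasurable)) (fun i => hm.comp (measurable_pi_apply i))]
    have h3 : ∀ i : Fin q, ∫⁻ ξ : Fin q → EuclideanSpace ℝ (Fin d),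
        ENNReal.ofReal (Real.exp (inner ℝ g (ξ i)))
        ∂(Measure.pi fun _ : Fin q => gaussMeasure d t)
        = ENNReal.ofReal (Real.exp (t * ‖g‖ ^ 2 / 2)) := by
      intro i
      rw [← aux_mgf ht]
      exact (measurePreserving_eval (fun _ : Fin q => gaussMeasure d t) i).lintegral_comp hm
    simp_rw [h3]
    rw [Finset.prod_const, ← ENNReal.ofReal_pow (Real.exp_pos _).le, ← Real.exp_nat_mul]
    congr 2
    simp
    ring
  simp_rw [h1]
  rw [aux_sq hL (by linarith)]
  congr 3
  ring

lemma aux_line {d : ℕ} (V : EuclideanSpace ℝ (Fin d) → ℝ) (hV : ContDiff ℝ 2 V)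
    (x h : EuclideanSpace ℝ (Fin d)) (s : ℝ) :
    HasDerivAt (fun s : ℝ => V (x + s • h)) (inner ℝ (gradient V (x + s • h)) h) s := by
  have h1 : HasGradientAt V (gradient V (x + s • h)) (x + s • h) :=
    (hV.differentiable (by norm_num) _).hasGradientAt
  have h2 : HasDerivAt (fun s : ℝ => x + s • h) h s := by
    simpa using ((hasDerivAt_id s).smul_const h).const_add x
  have := h1.hasFDerivAt.comp_hasDerivAt s h2
  simpa [Function.comp_def] using this

lemma aux_convex {d : ℕ} (V : EuclideanSpace ℝ (Fin d) → ℝ) (hV : ContDiff ℝ 2 V)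
    (hconv : ConvexOn ℝ Set.univ V) (x h : EuclideanSpace ℝ (Fin d)) :
    V x + inner ℝ (gradient V x) h ≤ V (x + h) := by
  have h1 := aux_line V hV x h 0
  have h2 : ConvexOn ℝ Set.univ (fun s : ℝ => V (x + s • h)) := by
    have := hconv.comp_affineMap (AffineMap.lineMap x (x + h) : ℝ →ᵃ[ℝ] _)
    simpa [Function.comp_def, AffineMap.lineMap_apply, add_comm] using this
  have h3 := h2.le_slope_of_hasDerivAt (Set.mem_univ 0) (Set.mem_univ 1) one_pos h1
  have h4 : inner ℝ (gradient V x) h = fderiv ℝ V x h := by simp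
  simp [slope_def_field] at h3
  linarith

lemma aux_descent {d : ℕ} {L : ℝ} (V : EuclideanSpace ℝ (Fin d) → ℝ) (hV : ContDiff ℝ 2 V)
    (hsmooth : ∀ x y, ‖gradient V x - gradient V y‖ ≤ L * ‖x - y‖)
    (x h : EuclideanSpace ℝ (Fin d)) :
    V (x + h) ≤ V x + inner ℝ (gradient V x) h + L * ‖h‖ ^ 2 / 2 := by
  have hd : ∀ s : ℝ, HasDerivAt
      (fun s : ℝ => V (x + s • h) - s * inner ℝ (gradient V x) h - s ^ 2 * (L * ‖h‖ ^ 2 / 2))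
      (inner ℝ (gradient V (x + s • h)) h - inner ℝ (gradient V x) h
        - 2 * s * (L * ‖h‖ ^ 2 / 2)) s := by
    intro s
    refine ((aux_line V hV x h s).sub ?_).sub ?_
    · simpa using (hasDerivAt_id s).mul_const (inner ℝ (gradient V x) h)
    · simpa using (hasDerivAt_pow 2 s).mul_const (L * ‖h‖ ^ 2 / 2)
  have ha := antitoneOn_of_deriv_nonpos (convex_Icc (0:ℝ) 1)
    (fun s _ => (hd s).continuousAt.continuousWithinAt)
    (fun s _ => (hd s).differentiableAt.differentiableWithinAt) (by
      intro s hs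
      rw [interior_Icc] at hs
      rw [(hd s).deriv, ← inner_sub_left]
      have h1 := real_inner_le_norm (gradient V (x + s • h) - gradient V x) h
      have h2 := hsmooth (x + s • h) x
      rw [add_sub_cancel_left, norm_smul, Real.norm_of_nonneg hs.1.le] at h2
      have h3 := mul_le_mul_of_nonneg_right h2 (norm_nonneg h)
      nlinarith)
  have := ha (Set.left_mem_Icc.2 zero_le_one) (Set.right_mem_Icc.2 zero_le_one) zero_le_one
  have h4 : inner ℝ (gradient V x) h = fderiv ℝ V x h := by simp
  simp at this
  linarith

lemma aux_point {d : ℕ} {L : ℝ} (V : EuclideanSpace ℝ (Fin d) → ℝ) (hV : ContDiff ℝ 2 V)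
    (hconv : ConvexOn ℝ Set.univ V)
    (hsmooth : ∀ x y, ‖gradient V x - gradient V y‖ ≤ L * ‖x - y‖)
    (q : ℕ) (x : EuclideanSpace ℝ (Fin d)) (ξ : Fin q → EuclideanSpace ℝ (Fin d)) :
    -V x + (-(∑ i, V (x + ξ i)) + q * V x) ≤ -V (x + ∑ i, ξ i) + L * ‖∑ i, ξ i‖ ^ 2 / 2 := by
  have h1 := aux_descent V hV hsmooth x (∑ i, ξ i)
  have h2 : ∑ i, (V x + inner ℝ (gradient V x) (ξ i)) ≤ ∑ i, V (x + ξ i) :=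
    Finset.sum_le_sum fun i _ => aux_convex V hV hconv x (ξ i)
  rw [Finset.sum_add_distrib, ← inner_sum] at h2
  rw [Finset.sum_const, Finset.card_univ, Fintype.card_fin, nsmul_eq_mul] at h2
  linarith

/-- For ρ ∝ exp(−V) with V convex and L-smooth, q ≥ 2 an integer
and ξ₁,…,ξ_q i.i.d. N(0,tI) with Lqt < 1,
∫ E[exp(−∑ᵢ V(x+ξᵢ) + qV(x))] ρ(dx) ≤ (1 − Lqt)^{−d/2}. -/
theorem exp_moment_heat_bound {d : ℕ} (L t : ℝ) (hL : 0 < L) (ht : 0 ≤ t)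
    (V : EuclideanSpace ℝ (Fin d) → ℝ) (hV : ContDiff ℝ 2 V)
    (hconv : ConvexOn ℝ Set.univ V)
    (hsmooth : ∀ x y, ‖gradient V x - gradient V y‖ ≤ L * ‖x - y‖)
    (Z : ℝ) (hZ : Z = ∫ x, Real.exp (-(V x)))
    (ρ : Measure (EuclideanSpace ℝ (Fin d)))
    (hρ : ρ = volume.withDensity fun x => ENNReal.ofReal (Real.exp (-(V x)) / Z))
    (q : ℕ) (hq : 2 ≤ q) (hqt : L * q * t < 1) :
    ∫ x, (∫ ξ : Fin q → EuclideanSpace ℝ (Fin d),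
        Real.exp (-(∑ i, V (x + ξ i)) + q * V x)
        ∂(Measure.pi fun _ : Fin q => gaussMeasure d t)) ∂ρ
      ≤ (1 - L*q*t) ^ (-(d:ℝ)/2) := by
  have hVc : Continuous V := hV.continuous
  have hZ0 : 0 ≤ Z := hZ ▸ integral_nonneg fun x => (Real.exp_pos _).le
  have hc1 : 0 < 1 - L * q * t := by linarith
  have hB : 0 ≤ (1 - L*q*t) ^ (-(d:ℝ)/2) := by positivity
  rcases hZ0.eq_or_lt with hZ0 | hZpos
  · have : ρ = 0 := by
      rw [hρ, ← hZ0]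
      simp
    rw [this, integral_zero_measure]
    exact hB
  have hint : Integrable (fun x => Real.exp (-(V x))) := by
    by_contra hn
    rw [integral_undef hn] at hZ
    linarith
  have hone : ∫⁻ x, ENNReal.ofReal (Real.exp (-(V x)) / Z) = 1 := by
    rw [← ofReal_integral_eq_lintegral_ofReal (hint.div_const Z)
      (Filter.Eventually.of_forall fun x => by positivity), integral_div, ← hZ,
      div_self hZpos.ne', ENNReal.ofReal_one]
  rcases ht.eq_or_lt with ht0 | htpos
  · subst ht0
    rcases Nat.eq_zero_or_pos d with hd | hd
    · subst hd
      have hG : gaussMeasure 0 0 = volume := by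
        unfold gaussMeasure gaussPdf
        have : ∀ x : EuclideanSpace ℝ (Fin 0), x = 0 := fun x => Subsingleton.elim _ _
        simp [this]
      have hprob : IsProbabilityMeasure (volume : Measure (EuclideanSpace ℝ (Fin 0))) := by
        rw [volume_euclideanSpace_eq_dirac]
        infer_instance
      have hρp : IsProbabilityMeasure ρ := by
        constructor
        rw [hρ, withDensity_apply _ MeasurableSet.univ, Measure.restrict_univ, hone]
      have h0 : ∀ (x : EuclideanSpace ℝ (Fin 0)) (ξ : Fin q → EuclideanSpace ℝ (Fin 0)),
          -(∑ i, V (x + ξ i)) + q * V x = 0 := by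
        intro x ξ
        have : ∀ i, x + ξ i = x := fun i => Subsingleton.elim _ _
        simp [this]
      simp_rw [h0, hG]
      simp
    · have hG : gaussMeasure d 0 = 0 := by
        unfold gaussMeasure gaussPdf
        have : (2 * Real.pi * 0) ^ (-(d:ℝ)/2) = 0 := by
          rw [mul_zero, Real.zero_rpow]
          have : (0:ℝ) < d := by exact_mod_cast hd
          linarith
        simp only [this, zero_mul, ENNReal.ofReal_zero]
        exact withDensity_zero
      have hpi : (Measure.pi fun _ : Fin q => gaussMeasure d 0) = 0 := by
        rw [hG]
        have : Nonempty (Fin q) := ⟨⟨0, by omega⟩⟩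
        rw [← Measure.measure_univ_eq_zero]
        simp [Measure.pi_univ]
        omega
      rw [hpi]
      simp only [integral_zero_measure, integral_zero]
      exact hB
  have hp := aux_prob (d := d) htpos
  set P := (Measure.pi fun _ : Fin q => gaussMeasure d t) with hP
  have key : ∫⁻ x, (∫⁻ ξ : Fin q → EuclideanSpace ℝ (Fin d),
        ENNReal.ofReal (Real.exp (-(∑ i, V (x + ξ i)) + q * V x)) ∂P) ∂ρ
      ≤ ENNReal.ofReal ((1 - L*q*t) ^ (-(d:ℝ)/2)) := by
    rw [hρ]
    refine (lintegral_withDensity_le_lintegral_mul _ (by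
      apply Measurable.ennreal_ofReal
      apply Continuous.measurable
      fun_prop) _).trans ?_
    have hstep : ∀ x, ENNReal.ofReal (Real.exp (-(V x)) / Z) *
        (∫⁻ ξ : Fin q → EuclideanSpace ℝ (Fin d),
        ENNReal.ofReal (Real.exp (-(∑ i, V (x + ξ i)) + q * V x)) ∂P)
        ≤ ∫⁻ ξ : Fin q → EuclideanSpace ℝ (Fin d),
          ENNReal.ofReal (Real.exp (-(V (x + ∑ i, ξ i))) / Z) *
            ENNReal.ofReal (Real.exp (L * ‖∑ i, ξ i‖ ^ 2 / 2)) ∂P := by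
      intro x
      rw [← lintegral_const_mul' _ _ ENNReal.ofReal_ne_top]
      refine lintegral_mono fun ξ => ?_
      dsimp only
      rw [← ENNReal.ofReal_mul (by positivity), ← ENNReal.ofReal_mul (by positivity)]
      apply ENNReal.ofReal_le_ofReal
      rw [div_mul_eq_mul_div, div_mul_eq_mul_div, ← Real.exp_add, ← Real.exp_add]
      have := aux_point V hV hconv hsmooth q x ξ
      gcongr
    refine (lintegral_mono hstep).trans ?_
    rw [lintegral_lintegral_swap (by
      apply Measurable.aemeasurable
      unfold Function.uncurry
      refine Measurable.fun_mul ?_ ?_ <;>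
      · apply Measurable.ennreal_ofReal
        apply Continuous.measurable
        fun_prop)]
    have hin : ∀ ξ : Fin q → EuclideanSpace ℝ (Fin d),
        ∫⁻ x, ENNReal.ofReal (Real.exp (-(V (x + ∑ i, ξ i))) / Z) *
            ENNReal.ofReal (Real.exp (L * ‖∑ i, ξ i‖ ^ 2 / 2))
        = ENNReal.ofReal (Real.exp (L * ‖∑ i, ξ i‖ ^ 2 / 2)) := by
      intro ξ
      rw [lintegral_mul_const' _ _ ENNReal.ofReal_ne_top,
        lintegral_add_right_eq_self (fun x => ENNReal.ofReal (Real.exp (-(V x)) / Z)), hone,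
        one_mul]
    simp_rw [hin]
    exact (aux_sum hL htpos q hqt).le
  have h1 : ‖∫ x, (∫ ξ : Fin q → EuclideanSpace ℝ (Fin d),
        Real.exp (-(∑ i, V (x + ξ i)) + q * V x) ∂P) ∂ρ‖ₑ
      ≤ ENNReal.ofReal ((1 - L*q*t) ^ (-(d:ℝ)/2)) := by
    refine (enorm_integral_le_lintegral_enorm _).trans (le_trans ?_ key)
    refine lintegral_mono fun x => ?_
    refine (enorm_integral_le_lintegral_enorm _).trans ?_
    refine lintegral_mono fun ξ => ?_
    dsimp only
    rw [Real.enorm_of_nonneg (Real.exp_pos _).le]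
  rw [← ofReal_norm, ENNReal.ofReal_le_ofReal_iff hB] at h1
  exact (Real.le_norm_self _).trans h1
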